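/- arXiv:1712.00505 — 6 statements merged into one kernel-verified Lean document; each statement's English description precedes it below -/
import Mathlib

section
/- The subgroup of SL(2,ℤ) generated by the three matrices [[1,0],[-2,1]], [[-1,2],[0,-1]] and -Id₂ equals the principal congruence subgroup of level 2, Γ(2) = { g ∈ SL(2,ℤ) : g ≡ Id₂ mod 2 }. -/
open Matrix CongruenceSubgroup

/-!
Left multiplication by `T ^ (2 * k)` adds `2 * k` times the second row to the first, and its
conjugate by `S` acts likewise with the rows exchanged. If two integers have opposite parity and
the second is nonzero, adding an even multiple of it to the first makes the first strictly smaller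
in absolute value than the second, since equality is excluded by parity. The first column of an
element of `Γ(2)` has opposite parities, so a Euclidean algorithm with even quotients clears its
lower entry; the remaining matrix is `T ^ n` or `-T ^ n` with `n` even.
-/

open ModularGroup MatrixGroups

theorem exists_natAbs_add_two_mul_mul_lt {a c : ℤ} (hac : Odd (a + c)) (hc : c ≠ 0) :
    ∃ k : ℤ, (a + 2 * k * c).natAbs < c.natAbs := by
  set r := a.bmod (2 * c.natAbs)
  have hpos : 0 < 2 * c.natAbs := by lia
  have hle : -(c.natAbs : ℤ) ≤ r := by
    have := Int.le_bmod (x := a) hpos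
    lia
  have hlt : r < c.natAbs := by
    have := Int.bmod_lt (x := a) hpos
    lia
  obtain ⟨k, hk⟩ : ∃ k, r - a = 2 * k * c := by
    obtain ⟨u, hu⟩ : c ∣ c.natAbs := Int.dvd_natAbs_self
    refine ⟨-(u * a.bdiv (2 * c.natAbs)), ?_⟩
    have hdiv := Int.bmod_add_bdiv a (2 * c.natAbs)
    rw [Nat.cast_mul, Nat.cast_ofNat, hu] at hdiv
    linear_combination hdiv
  have hr : a + 2 * k * c = r := by linear_combination -hk
  have hodd : Odd (r + c) := by
    rw [← hr, add_right_comm, mul_assoc]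
    exact hac.add_even (even_two_mul _)
  have hne : r ≠ -c.natAbs := by
    obtain ⟨m, hm⟩ := hodd
    lia
  exact ⟨k, by lia⟩

theorem T_zpow_mul_apply_zero (n : ℤ) (g : SL(2, ℤ)) (j : Fin 2) :
    (T ^ n * g) 0 j = g 0 j + n * g 1 j := by
  simp [coe_T_zpow, Matrix.mul_apply]

theorem coe_S_mul_T_zpow_mul_S_inv (n : ℤ) :
    (S * T ^ n * S⁻¹ : SL(2, ℤ)).1 = !![1, 0; -n, 1] := by
  simp [coe_T_zpow, S_inv]

theorem S_mul_T_zpow_mul_S_inv_mul_apply_one (n : ℤ) (g : SL(2, ℤ)) (j : Fin 2) :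
    (S * T ^ n * S⁻¹ * g) 1 j = g 1 j - n * g 0 j := by
  have hmul := congrFun₂ (Matrix.SpecialLinearGroup.coe_mul (S * T ^ n * S⁻¹) g) 1 j
  rw [coe_S_mul_T_zpow_mul_S_inv] at hmul
  simpa [Matrix.mul_apply, neg_add_eq_sub] using hmul

theorem eq_T_zpow_or_eq_neg_T_zpow_of_apply_one_zero_eq_zero {g : SL(2, ℤ)} (hc : g 1 0 = 0) :
    g = T ^ g 0 1 ∨ g = -T ^ (-g 0 1) := by
  have hdet : g 0 0 * g 1 1 = 1 := by
    have := g.det_coe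
    rwa [det_fin_two, hc, mul_zero, sub_zero] at this
  rcases Int.eq_one_or_neg_one_of_mul_eq_one' hdet with ⟨ha, hd⟩ | ⟨ha, hd⟩
  · left
    ext i j
    fin_cases i <;> fin_cases j <;> simp [coe_T_zpow, ha, hc, hd]
  · right
    ext i j
    fin_cases i <;> fin_cases j <;> simp [coe_T_zpow, ha, hc, hd]

theorem mem_Gamma_two_iff {g : SL(2, ℤ)} :
    g ∈ Gamma 2 ↔ Odd (g 0 0) ∧ Even (g 0 1) ∧ Even (g 1 0) ∧ Odd (g 1 1) := by
  simp only [Gamma_mem, ZMod.intCast_eq_zero_iff_even, ZMod.intCast_eq_one_iff_odd]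

theorem exists_natAbs_apply_one_zero_lt {g : SL(2, ℤ)} (ha : Odd (g 0 0))
    (hc_even : Even (g 1 0)) (hc : g 1 0 ≠ 0) :
    ∃ k l : ℤ,
      ((S * T ^ (2 * l) * S⁻¹ * (T ^ (2 * k) * g)) 1 0).natAbs < (g 1 0).natAbs := by
  obtain ⟨k, hk⟩ := exists_natAbs_add_two_mul_mul_lt (ha.add_even hc_even) hc
  set a' := g 0 0 + 2 * k * g 1 0
  have ha' : Odd a' := ha.add_even (hc_even.mul_left _)
  have ha'_ne : a' ≠ 0 := by
    intro h
    simp [h] at ha'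
  obtain ⟨l, hl⟩ := exists_natAbs_add_two_mul_mul_lt (hc_even.add_odd ha') ha'_ne
  refine ⟨k, -l, lt_trans ?_ hk⟩
  rw [S_mul_T_zpow_mul_S_inv_mul_apply_one, T_zpow_mul_apply_zero, T_pow_mul_apply_one]
  simpa using hl

theorem Gamma_two_le {H : Subgroup SL(2, ℤ)} (hT : T ^ 2 ∈ H) (hS : S * T ^ 2 * S⁻¹ ∈ H)
    (hneg : -1 ∈ H) : Gamma 2 ≤ H := by
  have hT_zpow (k : ℤ) : T ^ (2 * k) ∈ H := by
    simpa only [_root_.zpow_mul, zpow_ofNat] using H.zpow_mem hT k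
  have hS_zpow (k : ℤ) : S * T ^ (2 * k) * S⁻¹ ∈ H := by
    simpa only [_root_.zpow_mul, zpow_ofNat, conj_zpow] using H.zpow_mem hS k
  have hT_Gamma (k : ℤ) : T ^ (2 * k) ∈ Gamma 2 :=
    ModularGroup_T_pow_mem_Gamma 2 (2 * k) (dvd_mul_right 2 k)
  have hS_Gamma (k : ℤ) : S * T ^ (2 * k) * S⁻¹ ∈ Gamma 2 :=
    (Gamma_normal 2).conj_mem _ (hT_Gamma k) S
  intro g hg
  induction hn : (g 1 0).natAbs using Nat.strong_induction_on generalizing g with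
  | _ n ih =>
  obtain ⟨ha, hb, hc_even, -⟩ := mem_Gamma_two_iff.mp hg
  by_cases hc : g 1 0 = 0
  · obtain ⟨k, hk⟩ := hb.two_dvd
    rcases eq_T_zpow_or_eq_neg_T_zpow_of_apply_one_zero_eq_zero hc with h | h
    · rw [h, hk]
      exact hT_zpow k
    · rw [h, hk, ← mul_neg, ← neg_one_mul]
      exact H.mul_mem hneg (hT_zpow (-k))
  · obtain ⟨k, l, hlt⟩ := exists_natAbs_apply_one_zero_lt ha hc_even hc
    have hmem : S * T ^ (2 * l) * S⁻¹ * (T ^ (2 * k) * g) ∈ H :=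
      ih _ (hn ▸ hlt) ((Gamma 2).mul_mem (hS_Gamma l) ((Gamma 2).mul_mem (hT_Gamma k) hg)) rfl
    rwa [H.mul_mem_cancel_left (hS_zpow l), H.mul_mem_cancel_left (hT_zpow k)] at hmem

theorem stmt2 :
    Subgroup.closure
      ({⟨!![1, 0; -2, 1], by norm_num [Matrix.det_fin_two_of]⟩,
        ⟨!![-1, 2; 0, -1], by norm_num [Matrix.det_fin_two_of]⟩,
        ⟨!![-1, 0; 0, -1], by norm_num [Matrix.det_fin_two_of]⟩} :
        Set (Matrix.SpecialLinearGroup (Fin 2) ℤ)) = Gamma 2 := by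
  apply le_antisymm
  · rw [Subgroup.closure_le]
    rintro _ (rfl | rfl | rfl) <;> exact Gamma_mem.mpr (by decide)
  · set L : SL(2, ℤ) := ⟨!![1, 0; -2, 1], _⟩
    set U : SL(2, ℤ) := ⟨!![-1, 2; 0, -1], _⟩
    set N : SL(2, ℤ) := ⟨!![-1, 0; 0, -1], _⟩
    have hL : S * T ^ 2 * S⁻¹ = L := Subtype.ext (by decide)
    have hU : T ^ 2 = N * U⁻¹ := by decide
    have hN : -1 = N := Subtype.ext (by decide)
    set H := Subgroup.closure {L, U, N}
    have hLH : L ∈ H := Subgroup.subset_closure (by simp)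
    have hUH : U ∈ H := Subgroup.subset_closure (by simp)
    have hNH : N ∈ H := Subgroup.subset_closure (by simp)
    exact Gamma_two_le (hU ▸ H.mul_mem hNH (H.inv_mem hUH)) (hL ▸ hLH) (hN ▸ hNH)
end

section
/- Let M₁₀ = [[1,-2πi,0,0],[0,1,0,0],[0,0,1,-2πi],[0,0,0,1]] and let M₁∞ be the inverse of the matrix [[1,0,2πi,0],[0,-1,-2,0],[0,0,1,-2πi],[0,0,0,-1]]. Then the rank of the 4×4 complex matrix M₁₀·M₁∞ − Id₄ equals 2; in particular M₁₀·M₁∞ is not a pseudo-reflection. -/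
open Complex Matrix

noncomputable def M10 : Matrix (Fin 4) (Fin 4) ℂ :=
  !![1, -2 * (Real.pi : ℂ) * I, 0, 0;
     0, 1, 0, 0;
     0, 0, 1, -2 * (Real.pi : ℂ) * I;
     0, 0, 0, 1]

noncomputable def M1inf : Matrix (Fin 4) (Fin 4) ℂ :=
  (!![1, 0, 2 * (Real.pi : ℂ) * I, 0;
      0, -1, -2, 0;
      0, 0, 1, -2 * (Real.pi : ℂ) * I;
      0, 0, 0, -1])⁻¹

/-! Since `A * B⁻¹ - 1 = (A - B) * B⁻¹`, the rank in question is that of the difference of the two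
explicit matrices `M10` and `M1inf⁻¹`. The first two rows of this difference are multiples of
`(0, 1, 1, 0)` and the last two are multiples of `(0, 0, 0, 1)`, so its rank is at most two, while
the minor on the second and fourth rows and columns is `4`. -/

section Rank

variable {R m n k : Type*} [CommRing R]

lemma rank_mul_inv_sub_one [Fintype n] [DecidableEq n] (A : Matrix n n R) {B : Matrix n n R}
    (hB : IsUnit B.det) : (A * B⁻¹ - 1).rank = (A - B).rank := by
  rw [← mul_nonsing_inv B hB, ← Matrix.sub_mul]
  exact rank_mul_eq_left_of_isUnit_det _ _ (isUnit_nonsing_inv_det B hB)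

lemma card_le_rank_of_det_submatrix_mem_nonZeroDivisors [Nontrivial R] [Fintype n] [Fintype k]
    [DecidableEq k] (A : Matrix m n R) (r : k → m) (c : k → n)
    (h : (A.submatrix r c).det ∈ nonZeroDivisors R) : Fintype.card k ≤ A.rank :=
  (rank_of_det_mem_nonZeroDivisors h).symm.trans_le (rank_submatrix_le A r c)

end Rank

section Monodromy

variable {R : Type*} [CommRing R]

/-- The monodromy matrix `M10` around `x = 0` over a commutative ring, with a parameter `t` in place
of `-2πi`. -/
def monodromyZero (t : R) : Matrix (Fin 4) (Fin 4) R :=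
  !![1, t, 0, 0;
     0, 1, 0, 0;
     0, 0, 1, t;
     0, 0, 0, 1]

/-- The inverse of the monodromy matrix `M1inf` around `x = ∞` over a commutative ring, with a
parameter `t` in place of `-2πi`. The inverse is taken because `M1inf` itself is defined through
it. -/
def invMonodromyInfty (t : R) : Matrix (Fin 4) (Fin 4) R :=
  !![1, 0, -t, 0;
     0, -1, -2, 0;
     0, 0, 1, t;
     0, 0, 0, -1]

lemma isUpperTriangular_invMonodromyInfty (t : R) : (invMonodromyInfty t).IsUpperTriangular := by
  intro i j hji
  fin_cases i <;> fin_cases j <;> first | rfl | exact absurd hji (by decide)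

lemma det_invMonodromyInfty (t : R) : (invMonodromyInfty t).det = 1 := by
  rw [det_of_isUpperTriangular (isUpperTriangular_invMonodromyInfty t)]
  simp [invMonodromyInfty, Fin.prod_univ_four]

lemma monodromyZero_sub_invMonodromyInfty (t : R) :
    monodromyZero t - invMonodromyInfty t =
      !![0, t, t, 0;
         0, 2, 2, 0;
         0, 0, 0, 0;
         0, 0, 0, 2] := by
  ext i j
  fin_cases i <;> fin_cases j <;>
    simp [monodromyZero, invMonodromyInfty, one_add_one_eq_two]

lemma monodromyZero_sub_invMonodromyInfty_eq_mul (t : R) :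
    monodromyZero t - invMonodromyInfty t =
      !![t, 0; 2, 0; 0, 0; 0, 2] * (!![0, 1, 1, 0; 0, 0, 0, 1] : Matrix (Fin 2) (Fin 4) R) := by
  rw [monodromyZero_sub_invMonodromyInfty]
  ext i j
  fin_cases i <;> fin_cases j <;> simp [mul_apply]

lemma rank_monodromyZero_sub_invMonodromyInfty_le [Nontrivial R] (t : R) :
    (monodromyZero t - invMonodromyInfty t).rank ≤ 2 := by
  rw [monodromyZero_sub_invMonodromyInfty_eq_mul]
  exact (rank_mul_le_left _ _).trans (rank_le_width _)

lemma det_submatrix_monodromyZero_sub_invMonodromyInfty (t : R) :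
    ((monodromyZero t - invMonodromyInfty t).submatrix ![1, 3] ![1, 3]).det = 2 * 2 := by
  rw [monodromyZero_sub_invMonodromyInfty, det_fin_two]
  simp

lemma two_le_rank_monodromyZero_sub_invMonodromyInfty [Nontrivial R] (t : R)
    (h2 : (2 : R) ∈ nonZeroDivisors R) :
    2 ≤ (monodromyZero t - invMonodromyInfty t).rank := by
  have hminor := det_submatrix_monodromyZero_sub_invMonodromyInfty t ▸ mul_mem h2 h2
  simpa using card_le_rank_of_det_submatrix_mem_nonZeroDivisors _ _ _ hminor

theorem stmt6_general [Nontrivial R] (t : R) (h2 : (2 : R) ∈ nonZeroDivisors R) :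
    (monodromyZero t * (invMonodromyInfty t)⁻¹ - 1).rank = 2 := by
  have hdet : IsUnit (invMonodromyInfty t).det := by simp [det_invMonodromyInfty]
  rw [rank_mul_inv_sub_one _ hdet]
  exact le_antisymm (rank_monodromyZero_sub_invMonodromyInfty_le t)
    (two_le_rank_monodromyZero_sub_invMonodromyInfty t h2)

end Monodromy

theorem stmt6 : (M10 * M1inf - 1).rank = 2 := by
  simpa [M10, M1inf, monodromyZero, invMonodromyInfty] using
    stmt6_general (-2 * (Real.pi : ℂ) * I) (mem_nonZeroDivisors_of_ne_zero two_ne_zero)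
end

section
/- Let M₁₀ = [[1,-2πi,0,0],[0,1,0,0],[0,0,1,-2πi],[0,0,0,1]], M₂₀ = [[1,0,-2πi,0],[0,1,0,-2πi],[0,0,1,0],[0,0,0,1]], M₁∞ = inverse of [[1,0,2πi,0],[0,-1,-2,0],[0,0,1,-2πi],[0,0,0,-1]], and M₂∞ = inverse of [[1,2πi,0,0],[0,1,0,-2πi],[0,-2,-1,0],[0,0,0,-1]], acting on row vectors a ∈ ℂ⁴ from the right by a ↦ a·M. Then the following subspaces of ℂ⁴ are invariant under all four generators: the 1-dimensional subspace spanned by (0,0,0,1); the 2-dimensional subspace spanned by (0,1,1,0) and (0,0,0,1); and the 3-dimensional subspace spanned by (0,1,1,0), (0,1,-1,0) and (0,0,0,1). In particular the monodromy representation is reducible. -/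
open Complex Matrix

noncomputable def M20 : Matrix (Fin 4) (Fin 4) ℂ :=
  !![1, 0, -2 * (Real.pi : ℂ) * I, 0;
     0, 1, 0, -2 * (Real.pi : ℂ) * I;
     0, 0, 1, 0;
     0, 0, 0, 1]

noncomputable def M2inf : Matrix (Fin 4) (Fin 4) ℂ :=
  (!![1, 2 * (Real.pi : ℂ) * I, 0, 0;
      0, 1, 0, -2 * (Real.pi : ℂ) * I;
      0, -2, -1, 0;
      0, 0, 0, -1])⁻¹

noncomputable def V1 : Submodule ℂ (Fin 4 → ℂ) :=
  Submodule.span ℂ {![0, 0, 0, 1]}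

noncomputable def V2 : Submodule ℂ (Fin 4 → ℂ) :=
  Submodule.span ℂ {![0, 1, 1, 0], ![0, 0, 0, 1]}

noncomputable def V3 : Submodule ℂ (Fin 4 → ℂ) :=
  Submodule.span ℂ {![0, 1, 1, 0], ![0, 1, -1, 0], ![0, 0, 0, 1]}

/-!
Each of the three subspaces is cut out by linear equations, so its invariance under a matrix `M`
amounts to equations between a few entries of `M`. For `M1inf` and `M2inf` these equations are read
off the displayed matrices rather than their inverses: if a surjective endomorphism `f` of a
finitely generated module preserves a submodule `p`, then the surjective endomorphism it induces on
the quotient by `p` is injective, so `f x ∈ p` forces `x ∈ p`. Hence the inverse of an invertible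
matrix preserves whatever the matrix preserves.
-/

section Invariance

variable {R : Type*}

theorem span_mem_invtSubmodule_iff {N : Type*} [Semiring R] [AddCommMonoid N] [Module R N]
    {f : Module.End R N} {s : Set N} :
    Submodule.span R s ∈ f.invtSubmodule ↔ ∀ x ∈ s, f x ∈ Submodule.span R s :=
  Submodule.span_le

theorem apply_mem_iff_of_mem_invtSubmodule_of_surjective {N : Type*} [Ring R] [OrzechProperty R]
    [AddCommGroup N] [Module R N] [Module.Finite R N] {f : Module.End R N} {p : Submodule R N}
    (hp : p ∈ f.invtSubmodule) (hf : Function.Surjective f) {x : N} : f x ∈ p ↔ x ∈ p := by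
  have le_comap : p ≤ p.comap f := hp
  have quotient_injective : Function.Injective (p.mapQ p f le_comap) := by
    refine OrzechProperty.injective_of_surjective_endomorphism _ fun y ↦ ?_
    obtain ⟨y, rfl⟩ := p.mkQ_surjective y
    obtain ⟨z, rfl⟩ := hf y
    exact ⟨p.mkQ z, rfl⟩
  refine ⟨fun hx ↦ ?_, fun hx ↦ hp hx⟩
  rw [← Submodule.Quotient.mk_eq_zero] at hx ⊢
  exact quotient_injective (by rwa [Submodule.mapQ_apply, map_zero])

theorem mem_invtSubmodule_vecMulLinear_inv {n : Type*} [Fintype n] [DecidableEq n] [CommRing R]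
    {M : Matrix n n R} {p : Submodule R (n → R)}
    (hp : p ∈ Module.End.invtSubmodule M.vecMulLinear) :
    p ∈ Module.End.invtSubmodule M⁻¹.vecMulLinear := by
  intro a ha
  by_cases hM : IsUnit M.det
  · have vecMul_inv_vecMul (b : n → R) : (b ᵥ* M⁻¹) ᵥ* M = b := by
      rw [vecMul_vecMul, nonsing_inv_mul M hM, vecMul_one]
    have surjective : Function.Surjective M.vecMulLinear :=
      fun b ↦ ⟨b ᵥ* M⁻¹, vecMul_inv_vecMul b⟩
    refine (apply_mem_iff_of_mem_invtSubmodule_of_surjective hp surjective).mp ?_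
    simpa only [vecMulLinear_apply, vecMul_inv_vecMul] using ha
  · simp [nonsing_inv_apply_not_isUnit M hM]

end Invariance

theorem mem_V1_iff {a : Fin 4 → ℂ} : a ∈ V1 ↔ a 0 = 0 ∧ a 1 = 0 ∧ a 2 = 0 := by
  rw [V1, Submodule.mem_span_singleton]
  constructor
  · rintro ⟨c, rfl⟩
    simp
  · rintro ⟨h0, h1, h2⟩
    refine ⟨a 3, ?_⟩
    ext i
    fin_cases i <;> simp [h0, h1, h2]

theorem mem_V2_iff {a : Fin 4 → ℂ} : a ∈ V2 ↔ a 0 = 0 ∧ a 1 = a 2 := by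
  rw [V2, Submodule.mem_span_pair]
  constructor
  · rintro ⟨c, d, rfl⟩
    simp
  · rintro ⟨h0, h12⟩
    refine ⟨a 2, a 3, ?_⟩
    ext i
    fin_cases i <;> simp [h0, h12]

theorem mem_V3_iff {a : Fin 4 → ℂ} : a ∈ V3 ↔ a 0 = 0 := by
  rw [V3, Submodule.mem_span_triple]
  constructor
  · rintro ⟨c, d, e, rfl⟩
    simp
  · intro h0
    refine ⟨(a 1 + a 2) / 2, (a 1 - a 2) / 2, a 3, ?_⟩
    ext i
    fin_cases i <;> simp [h0] <;> ring

section Flag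

variable {M : Matrix (Fin 4) (Fin 4) ℂ}

theorem V1_mem_invtSubmodule_iff :
    V1 ∈ Module.End.invtSubmodule M.vecMulLinear ↔ M 3 0 = 0 ∧ M 3 1 = 0 ∧ M 3 2 = 0 := by
  rw [V1, span_mem_invtSubmodule_iff, ← V1]
  simp [mem_V1_iff, vecMul, dotProduct, Fin.sum_univ_four]

theorem V2_mem_invtSubmodule_iff :
    V2 ∈ Module.End.invtSubmodule M.vecMulLinear ↔
      (M 1 0 + M 2 0 = 0 ∧ M 1 1 + M 2 1 = M 1 2 + M 2 2) ∧ M 3 0 = 0 ∧ M 3 1 = M 3 2 := by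
  rw [V2, span_mem_invtSubmodule_iff, ← V2]
  simp [mem_V2_iff, vecMul, dotProduct, Fin.sum_univ_four]

theorem V3_mem_invtSubmodule_iff :
    V3 ∈ Module.End.invtSubmodule M.vecMulLinear ↔ M 1 0 = 0 ∧ M 2 0 = 0 ∧ M 3 0 = 0 := by
  have sum_and_difference_eq_zero_iff :
      (M 1 0 + M 2 0 = 0 ∧ M 1 0 + -M 2 0 = 0 ∧ M 3 0 = 0) ↔
        M 1 0 = 0 ∧ M 2 0 = 0 ∧ M 3 0 = 0 := by
    grind
  rw [V3, span_mem_invtSubmodule_iff, ← V3, ← sum_and_difference_eq_zero_iff]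
  simp [mem_V3_iff, vecMul, dotProduct, Fin.sum_univ_four]

/-- The matrix `M`, acting on row vectors from the right, stabilizes each step of the flag
`V1 ⊂ V2 ⊂ V3`; all four monodromy generators are shown to do so. -/
def StabilizesFlag (M : Matrix (Fin 4) (Fin 4) ℂ) : Prop :=
  V1 ∈ Module.End.invtSubmodule M.vecMulLinear ∧
  V2 ∈ Module.End.invtSubmodule M.vecMulLinear ∧
  V3 ∈ Module.End.invtSubmodule M.vecMulLinear

theorem stabilizesFlag_iff :
    StabilizesFlag M ↔
      (M 1 0 = 0 ∧ M 2 0 = 0 ∧ M 3 0 = 0) ∧ (M 3 1 = 0 ∧ M 3 2 = 0) ∧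
        M 1 1 + M 2 1 = M 1 2 + M 2 2 := by
  rw [StabilizesFlag, V1_mem_invtSubmodule_iff, V2_mem_invtSubmodule_iff, V3_mem_invtSubmodule_iff]
  grind

theorem StabilizesFlag.inv (hM : StabilizesFlag M) : StabilizesFlag M⁻¹ :=
  ⟨mem_invtSubmodule_vecMulLinear_inv hM.1, mem_invtSubmodule_vecMulLinear_inv hM.2.1,
    mem_invtSubmodule_vecMulLinear_inv hM.2.2⟩

end Flag

theorem stabilizesFlag_M10 : StabilizesFlag M10 := by
  simp [stabilizesFlag_iff, M10]

theorem stabilizesFlag_M20 : StabilizesFlag M20 := by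
  simp [stabilizesFlag_iff, M20]

theorem stabilizesFlag_M1inf : StabilizesFlag M1inf := by
  rw [M1inf]
  have column_sums : (-1 : ℂ) = -2 + 1 := by norm_num
  exact StabilizesFlag.inv (by simpa [stabilizesFlag_iff] using column_sums)

theorem stabilizesFlag_M2inf : StabilizesFlag M2inf := by
  rw [M2inf]
  have column_sums : (1 : ℂ) + -2 = -1 := by norm_num
  exact StabilizesFlag.inv (by simpa [stabilizesFlag_iff] using column_sums)

theorem stmt10 :
    ∀ M ∈ ({M10, M20, M1inf, M2inf} : Set (Matrix (Fin 4) (Fin 4) ℂ)),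
      (∀ a ∈ V1, Matrix.vecMul a M ∈ V1) ∧
      (∀ a ∈ V2, Matrix.vecMul a M ∈ V2) ∧
      (∀ a ∈ V3, Matrix.vecMul a M ∈ V3) := by
  rintro M (rfl | rfl | rfl | rfl)
  · exact stabilizesFlag_M10
  · exact stabilizesFlag_M20
  · exact stabilizesFlag_M1inf
  · exact stabilizesFlag_M2inf
end

section
/- Let M₁₀, M₂₀, M₁∞, M₂∞ be the 4×4 complex matrices M₁₀ = [[1,-2πi,0,0],[0,1,0,0],[0,0,1,-2πi],[0,0,0,1]], M₂₀ = [[1,0,-2πi,0],[0,1,0,-2πi],[0,0,1,0],[0,0,0,1]], M₁∞ = inverse of [[1,0,2πi,0],[0,-1,-2,0],[0,0,1,-2πi],[0,0,0,-1]], M₂∞ = inverse of [[1,2πi,0,0],[0,1,0,-2πi],[0,-2,-1,0],[0,0,0,-1]], let G = [[0,-2,0,2],[2,0,-2,0],[0,2,0,-2],[-2,0,2,0]], and let R = (1/2)·[[√2,0,√2,0],[-i,-1,i,-1],[-i,1,i,1],[0,-√2,0,√2]]. Then √-1·G is a Hermitian quadratic invariant of the conjugated monodromy group: for each M among the four generators,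 writing M^R = R⁻¹·M·R, one has conj(M^R)ᵀ·(√-1·G)·M^R = √-1·G. -/
open Complex Matrix

def Gmat : Matrix (Fin 4) (Fin 4) ℂ :=
  !![0, -2, 0, 2;
     2, 0, -2, 0;
     0, 2, 0, -2;
     -2, 0, 2, 0]

noncomputable def Rmat : Matrix (Fin 4) (Fin 4) ℂ :=
  (1 / 2 : ℂ) • !![(Real.sqrt 2 : ℂ), 0, (Real.sqrt 2 : ℂ), 0;
                   -I, -1, I, -1;
                   -I, 1, I, 1;
                   0, -(Real.sqrt 2 : ℂ), 0, (Real.sqrt 2 : ℂ)]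

/-!
The pullback of `i G` along `R⁻¹` is `2√2` times the hyperbolic Hermitian form `u^* v + v^* u`,
where `u = (0, 1, 1, 0)` and `v = (0, 0, 0, 1)` are row vectors. Each of `M₁₀`, `M₂₀`, `M₁∞⁻¹`,
`M₂∞⁻¹` sends `v` to `±v` and `u` to `±u - 2πi v`, and such a map preserves the form because `2πi`
is purely imaginary. Invariance then passes to inverses and, along `R`, to the conjugated matrices.
-/

section PreservesForm

variable {n α : Type*} [Fintype n] [CommRing α] [StarRing α]

/-- The matrix `M` is an isometry of the sesquilinear form with Gram matrix `K`, conjugate-linear in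
the first variable. Neither `K` nor `M` is assumed invertible. -/
def PreservesForm (K M : Matrix n n α) : Prop :=
  Mᴴ * K * M = K

namespace PreservesForm

variable {K M : Matrix n n α}

theorem smul (h : PreservesForm K M) (c : α) : PreservesForm (c • K) M := by
  rw [PreservesForm, Matrix.mul_smul, Matrix.smul_mul, h]

variable [DecidableEq n]

theorem inv (h : PreservesForm K M) (hM : IsUnit M) : PreservesForm K M⁻¹ := by
  have hdet := (isUnit_iff_isUnit_det M).mp hM
  have hstar : M⁻¹ᴴ * Mᴴ = 1 := by
    rw [← conjTranspose_mul, mul_nonsing_inv M hdet, conjTranspose_one]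
  calc M⁻¹ᴴ * K * M⁻¹ = M⁻¹ᴴ * (Mᴴ * K * M) * M⁻¹ := by rw [h]
    _ = (M⁻¹ᴴ * Mᴴ) * K * (M * M⁻¹) := by simp only [Matrix.mul_assoc]
    _ = K := by rw [hstar, mul_nonsing_inv M hdet, Matrix.one_mul, Matrix.mul_one]

theorem conj (h : PreservesForm K M) {P : Matrix n n α} (hP : IsUnit P) :
    PreservesForm (Pᴴ * K * P) (P⁻¹ * M * P) := by
  have hcancel : P * (P⁻¹ * M * P) = M * P := by
    rw [Matrix.mul_assoc, mul_nonsing_inv_cancel_left _ _ ((isUnit_iff_isUnit_det P).mp hP)]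
  calc (P⁻¹ * M * P)ᴴ * (Pᴴ * K * P) * (P⁻¹ * M * P)
      = (P * (P⁻¹ * M * P))ᴴ * K * (P * (P⁻¹ * M * P)) := by
        simp only [conjTranspose_mul, Matrix.mul_assoc]
    _ = Pᴴ * (Mᴴ * K * M) * P := by
        rw [hcancel]
        simp only [conjTranspose_mul, Matrix.mul_assoc]
    _ = Pᴴ * K * P := by rw [h]

end PreservesForm

end PreservesForm

section HyperbolicForm

variable {n α : Type*} [CommRing α] [StarRing α]

/-- The Gram matrix `u^* v + v^* u` of the Hermitian form pairing the linear functionals given by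
the row vectors `u` and `v`. -/
def hyperbolicForm (u v : n → α) : Matrix n n α :=
  vecMulVec (star u) v + vecMulVec (star v) u

variable [Fintype n]

theorem conjTranspose_mul_hyperbolicForm_mul (u v : n → α) (M : Matrix n n α) :
    Mᴴ * hyperbolicForm u v * M = hyperbolicForm (u ᵥ* M) (v ᵥ* M) := by
  simp only [hyperbolicForm, Matrix.mul_add, Matrix.add_mul, mul_vecMulVec, vecMulVec_mul,
    star_vecMul]

theorem preservesForm_hyperbolicForm {u v : n → α} {M : Matrix n n α} {a b c : α}
    (hu : u ᵥ* M = a • u + c • v) (hv : v ᵥ* M = b • v)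
    (hab : star a * b = 1) (hcb : star c * b + star b * c = 0) :
    PreservesForm (hyperbolicForm u v) M := by
  have hba : star b * a = 1 := by simpa [mul_comm] using congrArg star hab
  rw [PreservesForm, conjTranspose_mul_hyperbolicForm_mul, hu, hv]
  ext i j
  simp only [hyperbolicForm, Matrix.add_apply, vecMulVec_apply, Pi.star_apply, Pi.add_apply,
    Pi.smul_apply, smul_eq_mul, star_add, star_mul']
  linear_combination star (u i) * v j * hab + star (v i) * u j * hba + star (v i) * v j * hcb

end HyperbolicForm

section Monodromy

/-- The Hermitian form preserved by the monodromy group before conjugation by `Rmat`. -/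
noncomputable def monodromyForm : Matrix (Fin 4) (Fin 4) ℂ :=
  hyperbolicForm ![0, 1, 1, 0] ![0, 0, 0, 1]

theorem preservesForm_monodromyForm_of_vecMul {M : Matrix (Fin 4) (Fin 4) ℂ} {ε t : ℝ}
    (hε : ε * ε = 1)
    (hu : ![0, 1, 1, 0] ᵥ* M = (ε : ℂ) • ![0, 1, 1, 0] + (t * I) • ![0, 0, 0, 1])
    (hv : ![0, 0, 0, 1] ᵥ* M = (ε : ℂ) • ![0, 0, 0, 1]) :
    PreservesForm monodromyForm M := by
  refine preservesForm_hyperbolicForm hu hv ?_ ?_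
  · simpa using mod_cast hε
  · simp only [star_def, map_mul, conj_ofReal, conj_I]
    ring

theorem preservesForm_M10 : PreservesForm monodromyForm M10 := by
  apply preservesForm_monodromyForm_of_vecMul (ε := 1) (t := -2 * Real.pi) (by norm_num) <;>
    simp [M10]

theorem preservesForm_M20 : PreservesForm monodromyForm M20 := by
  apply preservesForm_monodromyForm_of_vecMul (ε := 1) (t := -2 * Real.pi) (by norm_num) <;>
    simp [M20]

theorem preservesForm_M1inf : PreservesForm monodromyForm M1inf := by
  refine PreservesForm.inv ?_ ?_
  · apply preservesForm_monodromyForm_of_vecMul (ε := -1) (t := -2 * Real.pi) (by norm_num) <;>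
      norm_num
  · simp [isUnit_iff_isUnit_det, det_succ_row_zero, Fin.sum_univ_succ, Fin.succAbove]

theorem preservesForm_M2inf : PreservesForm monodromyForm M2inf := by
  refine PreservesForm.inv ?_ ?_
  · apply preservesForm_monodromyForm_of_vecMul (ε := -1) (t := -2 * Real.pi) (by norm_num) <;>
      norm_num
  · simp [isUnit_iff_isUnit_det, det_succ_row_zero, Fin.sum_univ_succ, Fin.succAbove]

theorem ofReal_sqrt_two_mul_self : (Real.sqrt 2 : ℂ) * Real.sqrt 2 = 2 := by
  exact_mod_cast Real.mul_self_sqrt zero_le_two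

theorem det_Rmat : Rmat.det = -I := by
  simp [Rmat, det_succ_row_zero, Fin.sum_univ_succ, Fin.succAbove]
  linear_combination (-I / 2) * ofReal_sqrt_two_mul_self

theorem isUnit_Rmat : IsUnit Rmat := by
  simp [isUnit_iff_isUnit_det, det_Rmat]

theorem I_smul_Gmat_eq :
    I • Gmat = (2 * Real.sqrt 2 : ℂ) • (Rmatᴴ * monodromyForm * Rmat) := by
  have hu : ![0, 1, 1, 0] ᵥ* Rmat = ![-I, 0, I, 0] := by
    norm_num [Rmat, ← neg_add, ← add_mul]
  have hv : ![0, 0, 0, 1] ᵥ* Rmat = (Real.sqrt 2 / 2 : ℂ) • ![0, -1, 0, 1] := by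
    simp [Rmat, div_eq_inv_mul]
  have hconj : starRingEnd ℂ 2 = 2 := conj_ofNat 2
  rw [monodromyForm, conjTranspose_mul_hyperbolicForm_mul, hu, hv]
  ext i j
  fin_cases i <;> fin_cases j <;> simp [Gmat, hyperbolicForm, hconj] <;>
    linear_combination -I * ofReal_sqrt_two_mul_self

end Monodromy

theorem stmt12 :
    ∀ M ∈ ({M10, M20, M1inf, M2inf} : Set (Matrix (Fin 4) (Fin 4) ℂ)),
      (Rmat⁻¹ * M * Rmat).conjTranspose * (I • Gmat) * (Rmat⁻¹ * M * Rmat)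
        = I • Gmat := by
  intro M hM
  have hpres : PreservesForm monodromyForm M := by
    rcases hM with rfl | rfl | rfl | rfl
    exacts [preservesForm_M10, preservesForm_M20, preservesForm_M1inf, preservesForm_M2inf]
  rw [I_smul_Gmat_eq]
  exact (hpres.conj isUnit_Rmat).smul _
end

section
/- Let a, b be real numbers, α = e^{2πia}, β = e^{2πib} (so conj(α) = α⁻¹, conj(β) = β⁻¹). Let ρ(γ₁) = [[1,0,0,0],[1,α,0,0],[0,0,1,0],[0,0,1,α]], ρ(γ₂) = [[1,0,0,0],[0,1,0,0],[1,0,β,0],[0,1,0,β]], ρ(γ₃) = [[1,-1-α,-1-β,1-αβ],[0,1,0,0],[0,0,1,0],[0,0,0,1]], and let H̃ be the 4×4 matrix with rows V₁ = (0, i(1+α), i(1+β), i(-1+αβ)), V₂ = (-i(1+α⁻¹), -iα⁻¹(-1+α²), i(α⁻¹-β), -iβ(-1+α)(1-(αβ)⁻¹)), V₃ = (-i(1+β⁻¹), -i(α-β⁻¹), -iβ⁻¹(-1+β²), -iα(-1+β)(1-(αβ)⁻¹)), V₄ = (1-(αβ)⁻¹)·(i, i(-1+α), i(-1+β), i(-1+α)(-1+β)).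 Then H̃ is a Hermitian quadratic invariant of the representation: conj(ρ(γⱼ))ᵀ·H̃·ρ(γⱼ) = H̃ for j = 1, 2, 3. -/
/-!
Index `ℂ⁴` by pairs. Then `ρ(γ₁) = 1 ⊗ A(α)` and `ρ(γ₂) = A(β) ⊗ 1`, where `A(t)` is the `2 × 2`
matrix with rows `(1, 0)` and `(1, t)`. For `|t| = 1` the sesquilinear forms preserved by `A(t)`
include `E = diag(1, 0)` and the matrix `Q(t)` with rows `(0, -t)` and `(1, t - 1)`, so every
combination of Kronecker products of these is preserved by `ρ(γ₁)` and `ρ(γ₂)`. The invariant is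
`H̃ = i H`, where
`H = (1 - (αβ)⁻¹) Q(β) ⊗ Q(α) - (1 + β⁻¹) Q(β) ⊗ E - (1 + α⁻¹) E ⊗ Q(α)`.
Since `Q(t)ᴴ = -t⁻¹ Q(t)`, the form `H` is skew-Hermitian, and the vanishing cycle
`δ = (1, 0, 0, 0)` is isotropic for it. Finally `ρ(γ₃)` is the Picard–Lefschetz transvection
`x ↦ x - H(δ, x) δ`, which preserves `H` because `H(x - H(δ, x) δ, y - H(δ, y) δ)` differs from
`H(x, y)` only by terms that cancel by skewness or contain the factor `H(δ, δ) = 0`.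
-/

open Matrix Complex
open scoped Kronecker

section InvariantForms

variable {n m R : Type*} [Fintype n] [Fintype m] [CommSemiring R] [StarRing R]

/-- The Gram matrices `H` of sesquilinear forms (conjugate-linear in the first variable) preserved
by `g`, that is, with `gᴴ * H * g = H`. No Hermitian symmetry of `H` is imposed, so that
they form an `R`-submodule. -/
def invariantForms (g : Matrix n n R) : Submodule R (Matrix n n R) where
  carrier := {H | gᴴ * H * g = H}
  add_mem' {H K} (hH : _ = _) (hK : _ = _) := show _ = _ by rw [mul_add, add_mul, hH, hK]
  zero_mem' := show _ = _ by rw [mul_zero, zero_mul]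
  smul_mem' c H (hH : _ = _) := show _ = _ by rw [Matrix.mul_smul, Matrix.smul_mul, hH]

theorem mem_invariantForms {g H : Matrix n n R} : H ∈ invariantForms g ↔ gᴴ * H * g = H :=
  Iff.rfl

theorem mem_invariantForms_one [DecidableEq n] (H : Matrix n n R) :
    H ∈ invariantForms (1 : Matrix n n R) := by
  rw [mem_invariantForms, conjTranspose_one, one_mul, mul_one]

theorem kronecker_mem_invariantForms {g H : Matrix n n R} {h K : Matrix m m R}
    (hH : H ∈ invariantForms g) (hK : K ∈ invariantForms h) :
    H ⊗ₖ K ∈ invariantForms (g ⊗ₖ h) := by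
  rw [mem_invariantForms] at *
  rw [conjTranspose_kronecker, ← mul_kronecker_mul, ← mul_kronecker_mul, hH, hK]

theorem reindex_mem_invariantForms (e : n ≃ m) {g H : Matrix n n R} (hH : H ∈ invariantForms g) :
    reindex e e H ∈ invariantForms (reindex e e g) := by
  rw [mem_invariantForms] at *
  simp only [reindex_apply, conjTranspose_submatrix, submatrix_mul_equiv, hH]

/-- The Picard–Lefschetz map `x ↦ x + c H(v, x) v` of a sesquilinear form with Gram matrix `H`:
a transvection if `v` is isotropic, and a pseudo-reflection in general. -/
def picardLefschetz [DecidableEq n] (H : Matrix n n R) (v : n → R) (c : R) : Matrix n n R :=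
  1 + c • vecMulVec v (star v ᵥ* H)

theorem mem_invariantForms_picardLefschetz [DecidableEq n] {H : Matrix n n R} {v : n → R} {c ε : R}
    (hH : Hᴴ = ε • H) (hc : c + ε * star c * (1 + c * (star v ⬝ᵥ H *ᵥ v)) = 0) :
    H ∈ invariantForms (picardLefschetz H v c) := by
  set P := vecMulVec (H *ᵥ v) (star v ᵥ* H)
  have hadj : (picardLefschetz H v c)ᴴ = 1 + (ε * star c) • vecMulVec (H *ᵥ v) (star v) := by
    rw [picardLefschetz, conjTranspose_add, conjTranspose_one, conjTranspose_smul,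
      conjTranspose_vecMulVec, star_vecMul, star_star, hH, smul_mulVec, smul_vecMulVec, smul_smul,
      mul_comm]
  have hright : H * picardLefschetz H v c = H + c • P := by
    rw [picardLefschetz, mul_add, mul_one, Matrix.mul_smul, mul_vecMulVec]
  have hleft : vecMulVec (H *ᵥ v) (star v) * H = P := vecMulVec_mul ..
  have hcross : vecMulVec (H *ᵥ v) (star v) * P = (star v ⬝ᵥ H *ᵥ v) • P := by
    rw [vecMulVec_mul_vecMulVec, vecMulVec_smul]
  calc (picardLefschetz H v c)ᴴ * H * picardLefschetz H v c
      = H + (c + ε * star c * (1 + c * (star v ⬝ᵥ H *ᵥ v))) • P := by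
        rw [Matrix.mul_assoc, hright, hadj, add_mul, one_mul, Matrix.smul_mul, mul_add, hleft,
          Matrix.mul_smul, hcross]
        module
    _ = H := by rw [hc, zero_smul, add_zero]

end InvariantForms

section HornSystem

variable {R : Type*} [CommRing R]

/-- The tensor factor `A(t)` of the monodromies `ρ(γ₁) = 1 ⊗ A(α)` and `ρ(γ₂) = A(β) ⊗ 1`. -/
def localMonodromy (t : R) : Matrix (Fin 2) (Fin 2) R := !![1, 0; 1, t]

/-- The `A(t)`-invariant form `Q(t)`. Together with `E = single 0 0 1` it supplies the tensor
factors of the invariant form of the Horn system. -/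
def localForm (t : R) : Matrix (Fin 2) (Fin 2) R := !![0, -t; 1, t - 1]

/-- `finProdFinEquiv` sends `(i, j)` to `2 i + j`: the first factor indexes the blocks. -/
theorem reindex_one_kronecker_localMonodromy (t : R) :
    reindex finProdFinEquiv finProdFinEquiv ((1 : Matrix (Fin 2) (Fin 2) R) ⊗ₖ localMonodromy t) =
      !![1, 0, 0, 0; 1, t, 0, 0; 0, 0, 1, 0; 0, 0, 1, t] := by
  ext i j
  fin_cases i <;> fin_cases j <;> simp [localMonodromy, finProdFinEquiv, Fin.divNat, Fin.modNat]

theorem reindex_localMonodromy_kronecker_one (t : R) :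
    reindex finProdFinEquiv finProdFinEquiv (localMonodromy t ⊗ₖ (1 : Matrix (Fin 2) (Fin 2) R)) =
      !![1, 0, 0, 0; 0, 1, 0, 0; 1, 0, t, 0; 0, 1, 0, t] := by
  ext i j
  fin_cases i <;> fin_cases j <;> simp [localMonodromy, finProdFinEquiv, Fin.divNat, Fin.modNat]

variable [StarRing R] {t α β : R}

theorem single_mem_invariantForms_localMonodromy (t : R) :
    single 0 0 1 ∈ invariantForms (localMonodromy t) := by
  rw [mem_invariantForms]
  ext i j
  fin_cases i <;> fin_cases j <;> simp [localMonodromy, mul_apply]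

theorem localForm_mem_invariantForms_localMonodromy (ht : t ∈ unitary R) :
    localForm t ∈ invariantForms (localMonodromy t) := by
  have hunit : star t * t = 1 := Unitary.star_mul_self_of_mem ht
  rw [mem_invariantForms]
  ext i j
  fin_cases i <;> fin_cases j <;> simp [localMonodromy, localForm, mul_apply] <;> grind

theorem conjTranspose_localForm (ht : t ∈ unitary R) :
    (localForm t)ᴴ = -star t • localForm t := by
  have hunit : star t * t = 1 := Unitary.star_mul_self_of_mem ht
  ext i j
  fin_cases i <;> fin_cases j <;> simp [localForm] <;> grind

/-- The skew-Hermitian form `H` on `R² ⊗ R²` invariant under the Horn monodromy. The Hermitian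
invariant `H̃` of the paper is `i H`; leaving out `i` makes `H` available over any coefficient
ring with involution. -/
def hornForm (α β : R) : Matrix (Fin 2 × Fin 2) (Fin 2 × Fin 2) R :=
  (1 - star (α * β)) • localForm β ⊗ₖ localForm α
    - (1 + star β) • localForm β ⊗ₖ single 0 0 1 - (1 + star α) • single 0 0 1 ⊗ₖ localForm α

theorem hornForm_mem_invariantForms {g h : Matrix (Fin 2) (Fin 2) R}
    (hE : single 0 0 1 ∈ invariantForms g) (hE' : single 0 0 1 ∈ invariantForms h)
    (hβ : localForm β ∈ invariantForms g) (hα : localForm α ∈ invariantForms h) :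
    hornForm α β ∈ invariantForms (g ⊗ₖ h) :=
  sub_mem (sub_mem
    (Submodule.smul_mem _ _ (kronecker_mem_invariantForms hβ hα))
    (Submodule.smul_mem _ _ (kronecker_mem_invariantForms hβ hE')))
    (Submodule.smul_mem _ _ (kronecker_mem_invariantForms hE hα))

theorem hornForm_mem_invariantForms_one_kronecker (hα : α ∈ unitary R) (β : R) :
    hornForm α β ∈ invariantForms (1 ⊗ₖ localMonodromy α) :=
  hornForm_mem_invariantForms (mem_invariantForms_one _)
    (single_mem_invariantForms_localMonodromy α) (mem_invariantForms_one _)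
    (localForm_mem_invariantForms_localMonodromy hα)

theorem hornForm_mem_invariantForms_kronecker_one (α : R) (hβ : β ∈ unitary R) :
    hornForm α β ∈ invariantForms (localMonodromy β ⊗ₖ 1) :=
  hornForm_mem_invariantForms (single_mem_invariantForms_localMonodromy β)
    (mem_invariantForms_one _) (localForm_mem_invariantForms_localMonodromy hβ)
    (mem_invariantForms_one _)

theorem conjTranspose_hornForm (hα : α ∈ unitary R) (hβ : β ∈ unitary R) :
    (hornForm α β)ᴴ = (-1 : R) • hornForm α β := by
  have hα' : star α * α = 1 := Unitary.star_mul_self_of_mem hα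
  have hβ' : star β * β = 1 := Unitary.star_mul_self_of_mem hβ
  simp only [hornForm, conjTranspose_sub, conjTranspose_smul, conjTranspose_kronecker,
    conjTranspose_single, conjTranspose_localForm hα, conjTranspose_localForm hβ, smul_kronecker,
    kronecker_smul, star_sub, star_add, star_one, star_star, star_mul]
  match_scalars <;> grind

/-- The vanishing cycle `δ` of the Picard–Lefschetz transvection `ρ(γ₃)`. -/
def vanishingCycle : Fin 2 × Fin 2 → R := Pi.single (0, 0) 1

theorem hornForm_vanishingCycle_isotropic (α β : R) :
    star vanishingCycle ⬝ᵥ hornForm α β *ᵥ vanishingCycle = 0 := by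
  simp [vanishingCycle, hornForm, localForm, Pi.star_single]

theorem hornForm_mem_invariantForms_picardLefschetz (hα : α ∈ unitary R) (hβ : β ∈ unitary R) :
    hornForm α β ∈ invariantForms (picardLefschetz (hornForm α β) vanishingCycle (-1)) :=
  mem_invariantForms_picardLefschetz (conjTranspose_hornForm hα hβ) <| by
    rw [hornForm_vanishingCycle_isotropic, star_neg, star_one]
    ring

theorem reindex_picardLefschetz_hornForm (hα : α ∈ unitary R) (hβ : β ∈ unitary R) :
    reindex finProdFinEquiv finProdFinEquiv
        (picardLefschetz (hornForm α β) vanishingCycle (-1)) =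
      !![1, -1 - α, -1 - β, 1 - α * β; 0, 1, 0, 0; 0, 0, 1, 0; 0, 0, 0, 1] := by
  have hα' : star α * α = 1 := Unitary.star_mul_self_of_mem hα
  have hβ' : star β * β = 1 := Unitary.star_mul_self_of_mem hβ
  ext i j
  fin_cases i <;> fin_cases j <;>
    simp [picardLefschetz, vanishingCycle, hornForm, localForm, vecMulVec_apply, Pi.star_single,
      finProdFinEquiv, Fin.divNat, Fin.modNat] <;> grind

theorem stmt15_general (hα : α ∈ unitary R) (hβ : β ∈ unitary R) (c : R) :
    let ρ₁ : Matrix (Fin 4) (Fin 4) R :=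
      !![1, 0, 0, 0;
         1, α, 0, 0;
         0, 0, 1, 0;
         0, 0, 1, α]
    let ρ₂ : Matrix (Fin 4) (Fin 4) R :=
      !![1, 0, 0, 0;
         0, 1, 0, 0;
         1, 0, β, 0;
         0, 1, 0, β]
    let ρ₃ : Matrix (Fin 4) (Fin 4) R :=
      !![1, -1 - α, -1 - β, 1 - α * β;
         0, 1, 0, 0;
         0, 0, 1, 0;
         0, 0, 0, 1]
    let Htilde : Matrix (Fin 4) (Fin 4) R :=
      !![0, c * (1 + α), c * (1 + β), c * (-1 + α * β);
         -c * (1 + star α), -c * star α * (-1 + α ^ 2), c * (star α - β),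
           -c * β * (-1 + α) * (1 - star (α * β));
         -c * (1 + star β), -c * (α - star β), -c * star β * (-1 + β ^ 2),
           -c * α * (-1 + β) * (1 - star (α * β));
         (1 - star (α * β)) * c, (1 - star (α * β)) * (c * (-1 + α)),
           (1 - star (α * β)) * (c * (-1 + β)),
           (1 - star (α * β)) * (c * (-1 + α) * (-1 + β))]
    ρ₁.conjTranspose * Htilde * ρ₁ = Htilde ∧
      ρ₂.conjTranspose * Htilde * ρ₂ = Htilde ∧
      ρ₃.conjTranspose * Htilde * ρ₃ = Htilde := by
  intro ρ₁ ρ₂ ρ₃ Htilde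
  have hα' : star α * α = 1 := Unitary.star_mul_self_of_mem hα
  have hβ' : star β * β = 1 := Unitary.star_mul_self_of_mem hβ
  have hHtilde : c • reindex finProdFinEquiv finProdFinEquiv (hornForm α β) = Htilde := by
    ext i j
    fin_cases i <;> fin_cases j <;>
      simp [Htilde, hornForm, localForm, finProdFinEquiv, Fin.divNat, Fin.modNat] <;> grind
  have invariant {g} (hg : hornForm α β ∈ invariantForms g) :
      Htilde ∈ invariantForms (reindex finProdFinEquiv finProdFinEquiv g) :=
    hHtilde ▸ Submodule.smul_mem _ c (reindex_mem_invariantForms _ hg)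
  refine ⟨?_, ?_, ?_⟩ <;> rw [← mem_invariantForms]
  · simpa only [reindex_one_kronecker_localMonodromy] using
      invariant (hornForm_mem_invariantForms_one_kronecker hα β)
  · simpa only [reindex_localMonodromy_kronecker_one] using
      invariant (hornForm_mem_invariantForms_kronecker_one α hβ)
  · simpa only [reindex_picardLefschetz_hornForm hα hβ] using
      invariant (hornForm_mem_invariantForms_picardLefschetz hα hβ)

end HornSystem

theorem exp_two_pi_mul_I_mem_unitary (x : ℝ) :
    Complex.exp (2 * Real.pi * I * x) ∈ unitary ℂ := by
  rw [Complex.exp_eq_exp_ℂ]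
  refine NormedSpace.exp_mem_unitary_of_mem_skewAdjoint (skewAdjoint.mem_iff.mpr ?_)
  simp

theorem star_eq_inv_of_mem_unitary {M : Type*} [DivisionMonoid M] [StarMul M] {z : M}
    (hz : z ∈ unitary M) : star z = z⁻¹ :=
  eq_inv_of_mul_eq_one_left (Unitary.star_mul_self_of_mem hz)

theorem stmt15 (a b : ℝ)
    (α β : ℂ)
    (hα : α = Complex.exp (2 * Real.pi * I * a))
    (hβ : β = Complex.exp (2 * Real.pi * I * b)) :
    let ρ₁ : Matrix (Fin 4) (Fin 4) ℂ :=
      !![1, 0, 0, 0;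
         1, α, 0, 0;
         0, 0, 1, 0;
         0, 0, 1, α]
    let ρ₂ : Matrix (Fin 4) (Fin 4) ℂ :=
      !![1, 0, 0, 0;
         0, 1, 0, 0;
         1, 0, β, 0;
         0, 1, 0, β]
    let ρ₃ : Matrix (Fin 4) (Fin 4) ℂ :=
      !![1, -1 - α, -1 - β, 1 - α * β;
         0, 1, 0, 0;
         0, 0, 1, 0;
         0, 0, 0, 1]
    let Htilde : Matrix (Fin 4) (Fin 4) ℂ :=
      !![0, I * (1 + α), I * (1 + β), I * (-1 + α * β);
         -I * (1 + α⁻¹), -I * α⁻¹ * (-1 + α ^ 2), I * (α⁻¹ - β),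
           -I * β * (-1 + α) * (1 - (α * β)⁻¹);
         -I * (1 + β⁻¹), -I * (α - β⁻¹), -I * β⁻¹ * (-1 + β ^ 2),
           -I * α * (-1 + β) * (1 - (α * β)⁻¹);
         (1 - (α * β)⁻¹) * I, (1 - (α * β)⁻¹) * (I * (-1 + α)),
           (1 - (α * β)⁻¹) * (I * (-1 + β)),
           (1 - (α * β)⁻¹) * (I * (-1 + α) * (-1 + β))]
    ρ₁.conjTranspose * Htilde * ρ₁ = Htilde ∧
      ρ₂.conjTranspose * Htilde * ρ₂ = Htilde ∧
      ρ₃.conjTranspose * Htilde * ρ₃ = Htilde := by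
  have hα' : α ∈ unitary ℂ := hα ▸ exp_two_pi_mul_I_mem_unitary a
  have hβ' : β ∈ unitary ℂ := hβ ▸ exp_two_pi_mul_I_mem_unitary b
  simpa only [star_eq_inv_of_mem_unitary, hα', hβ', mul_mem hα' hβ'] using
    stmt15_general hα' hβ' I
end

section
/- Let H̃₀ = [[0,2i√2,2i√2,0],[-2i√2,0,0,0],[-2i√2,0,0,0],[0,0,0,0]], G = [[0,-2,0,2],[2,0,-2,0],[0,2,0,-2],[-2,0,2,0]], and R₀ = (1/√2)·[[i,0,-i,0],[0,-(1+i)/√2,0,-(1-i)/√2],[0,(1-i)/√2,0,(1+i)/√2],[1,0,1,0]]. Then R₀ is unitary, i.e. conj(R₀)ᵀ·R₀ = Id₄, and conj(R₀)ᵀ·H̃₀·R₀ = √-1·G. Consequently √-1·G is a Hermitian quadratic invariant of the conjugated Picard–Lefschetz monodromy representation ⟨ρ₀(γ₁)^{R₀}, ρ₀(γ₂)^{R₀}, ρ₀(γ₃)^{R₀}⟩, where ρ₀(γ₁) = [[1,0,0,0],[1,1,0,0],[0,0,1,0],[0,0,1,1]], ρ₀(γ₂) = [[1,0,0,0],[0,1,0,0],[1,0,1,0],[0,1,0,1]],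 ρ₀(γ₃) = [[1,-2,-2,0],[0,1,0,0],[0,0,1,0],[0,0,0,1]], and A^B = B⁻¹·A·B. -/
open Matrix Complex

def rho1 : Matrix (Fin 4) (Fin 4) ℂ :=
  !![1, 0, 0, 0;
     1, 1, 0, 0;
     0, 0, 1, 0;
     0, 0, 1, 1]

def rho2 : Matrix (Fin 4) (Fin 4) ℂ :=
  !![1, 0, 0, 0;
     0, 1, 0, 0;
     1, 0, 1, 0;
     0, 1, 0, 1]

def rho3 : Matrix (Fin 4) (Fin 4) ℂ :=
  !![1, -2, -2, 0;
     0, 1, 0, 0;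
     0, 0, 1, 0;
     0, 0, 0, 1]

noncomputable def Htilde0 : Matrix (Fin 4) (Fin 4) ℂ :=
  !![0, 2 * I * (Real.sqrt 2 : ℂ), 2 * I * (Real.sqrt 2 : ℂ), 0;
     -2 * I * (Real.sqrt 2 : ℂ), 0, 0, 0;
     -2 * I * (Real.sqrt 2 : ℂ), 0, 0, 0;
     0, 0, 0, 0]

noncomputable def R0 : Matrix (Fin 4) (Fin 4) ℂ :=
  (1 / (Real.sqrt 2 : ℂ)) •
    !![I, 0, -I, 0;
       0, -(1 + I) / (Real.sqrt 2 : ℂ), 0, -(1 - I) / (Real.sqrt 2 : ℂ);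
       0, (1 - I) / (Real.sqrt 2 : ℂ), 0, (1 + I) / (Real.sqrt 2 : ℂ);
       1, 0, 1, 0]

/-!
Both Hermitian forms have rank two. Modulo its radical, `H̃₀` is an imaginary multiple of the
standard symplectic form `J` on `ℂ²`, and each `ρ₀(γⱼ)` descends to a real matrix of determinant
one, which preserves `J` because `Aᵀ J A = det A • J`. The matrix `R₀` carries the radical of
`√-1 G` to that of `H̃₀` and induces on the quotients a matrix `D` with purely imaginary entries, so
that `Dᴴ J D = -det D • J`; this identifies `R₀ᴴ H̃₀ R₀` with `√-1 G`.
-/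

section InvariantForm

variable {m n α : Type*} [Fintype m] [Fintype n]

/-- The sesquilinear form with Gram matrix `K` is an invariant of `g`: for Hermitian `K`, this is
the condition that `K` is a Hermitian quadratic invariant. The definition itself does not ask `K`
to be Hermitian. -/
def IsInvariantForm [NonUnitalSemiring α] [StarRing α] (K g : Matrix n n α) : Prop :=
  gᴴ * K * g = K

theorem IsInvariantForm.pullback [NonUnitalSemiring α] [StarRing α]
    {K A : Matrix m m α} {g : Matrix n n α} {P : Matrix m n α}
    (hA : IsInvariantForm K A) (hP : P * g = A * P) : IsInvariantForm (Pᴴ * K * P) g :=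
  calc gᴴ * (Pᴴ * K * P) * g
      = (P * g)ᴴ * K * (P * g) := by simp only [conjTranspose_mul, Matrix.mul_assoc]
    _ = Pᴴ * (Aᴴ * K * A) * P := by simp only [hP, conjTranspose_mul, Matrix.mul_assoc]
    _ = Pᴴ * K * P := by rw [hA]

theorem IsInvariantForm.conj [DecidableEq n] [CommRing α] [StarRing α] {K g R : Matrix n n α}
    (hg : IsInvariantForm K g) (hR : IsUnit R.det) :
    IsInvariantForm (Rᴴ * K * R) (R⁻¹ * g * R) :=
  hg.pullback (by rw [Matrix.mul_assoc, mul_nonsing_inv_cancel_left R _ hR])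

end InvariantForm

section SymplecticPlane

variable {α : Type*} [CommRing α]

variable (α) in
/-- The Gram matrix of the standard symplectic form on the plane, indexed by `Fin 2` where
`Matrix.J` would need a sum type. -/
def planeJ : Matrix (Fin 2) (Fin 2) α :=
  !![0, 1; -1, 0]

theorem transpose_mul_planeJ_mul (A : Matrix (Fin 2) (Fin 2) α) :
    Aᵀ * planeJ α * A = A.det • planeJ α := by
  ext i j
  fin_cases i <;> fin_cases j <;>
    simp [planeJ, Matrix.mul_apply, Fin.sum_univ_two, det_fin_two] <;> ring

theorem isInvariantForm_smul_planeJ [StarRing α] {A : Matrix (Fin 2) (Fin 2) α} (c : α)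
    (hreal : Aᴴ = Aᵀ) (hdet : A.det = 1) : IsInvariantForm (c • planeJ α) A := by
  rw [IsInvariantForm, Matrix.mul_smul, Matrix.smul_mul, hreal, transpose_mul_planeJ_mul, hdet,
    one_smul]

end SymplecticPlane

/-- The projection of `ℂ⁴` onto its quotient by the radical of `Htilde0`, in coordinates. -/
def modRadHtilde0 : Matrix (Fin 2) (Fin 4) ℂ :=
  !![1, 0, 0, 0;
     0, 1, 1, 0]

/-- The projection of `ℂ⁴` onto its quotient by the radical of `Gmat`, in coordinates. -/
def modRadGmat : Matrix (Fin 2) (Fin 4) ℂ :=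
  !![1, 0, -1, 0;
     0, 1, 0, -1]

theorem Htilde0_eq_pullback :
    Htilde0 = modRadHtilde0ᴴ * ((2 * I * (Real.sqrt 2 : ℂ)) • planeJ ℂ) * modRadHtilde0 := by
  ext i j
  fin_cases i <;> fin_cases j <;>
    simp [Htilde0, modRadHtilde0, planeJ, Matrix.mul_apply, Fin.sum_univ_two]

theorem Gmat_eq_pullback : Gmat = modRadGmatᴴ * ((-2 : ℂ) • planeJ ℂ) * modRadGmat := by
  ext i j
  fin_cases i <;> fin_cases j <;>
    simp [Gmat, modRadGmat, planeJ, Matrix.mul_apply, Fin.sum_univ_two]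

theorem modRadHtilde0_mul_rho1 :
    modRadHtilde0 * rho1 = (!![1, 0; 1, 1] : Matrix (Fin 2) (Fin 2) ℂ) * modRadHtilde0 := by
  simp [modRadHtilde0, rho1]

theorem modRadHtilde0_mul_rho2 :
    modRadHtilde0 * rho2 = (!![1, 0; 1, 1] : Matrix (Fin 2) (Fin 2) ℂ) * modRadHtilde0 := by
  simp [modRadHtilde0, rho2]

theorem modRadHtilde0_mul_rho3 :
    modRadHtilde0 * rho3 = (!![1, -2; 0, 1] : Matrix (Fin 2) (Fin 2) ℂ) * modRadHtilde0 := by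
  simp [modRadHtilde0, rho3]

theorem isInvariantForm_Htilde0_of_mul_eq {ρ : Matrix (Fin 4) (Fin 4) ℂ}
    {A : Matrix (Fin 2) (Fin 2) ℂ} (hρ : modRadHtilde0 * ρ = A * modRadHtilde0)
    (hreal : Aᴴ = Aᵀ) (hdet : A.det = 1) : IsInvariantForm Htilde0 ρ := by
  rw [Htilde0_eq_pullback]
  exact (isInvariantForm_smul_planeJ _ hreal hdet).pullback hρ

theorem isInvariantForm_Htilde0_of_mem {ρ : Matrix (Fin 4) (Fin 4) ℂ}
    (hρ : ρ ∈ ({rho1, rho2, rho3} : Set (Matrix (Fin 4) (Fin 4) ℂ))) :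
    IsInvariantForm Htilde0 ρ := by
  have lower_real : (!![1, 0; 1, 1] : Matrix (Fin 2) (Fin 2) ℂ)ᴴ = !![1, 0; 1, 1]ᵀ := by
    ext i j; fin_cases i <;> fin_cases j <;> simp
  have upper_real : (!![1, -2; 0, 1] : Matrix (Fin 2) (Fin 2) ℂ)ᴴ = !![1, -2; 0, 1]ᵀ := by
    ext i j; fin_cases i <;> fin_cases j <;> simp
  rcases hρ with rfl | rfl | rfl
  · exact isInvariantForm_Htilde0_of_mul_eq modRadHtilde0_mul_rho1 lower_real (by simp)
  · exact isInvariantForm_Htilde0_of_mul_eq modRadHtilde0_mul_rho2 lower_real (by simp)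
  · exact isInvariantForm_Htilde0_of_mul_eq modRadHtilde0_mul_rho3 upper_real (by simp)

theorem sqrt_two_mul_self : (Real.sqrt 2 : ℂ) * (Real.sqrt 2 : ℂ) = 2 := by
  rw [← ofReal_mul, Real.mul_self_sqrt zero_le_two, ofReal_ofNat]

theorem R0_conjTranspose_mul_self : R0ᴴ * R0 = 1 := by
  have hI := I_mul_I
  have hs := sqrt_two_mul_self
  ext i j
  fin_cases i <;> fin_cases j <;>
    simp [R0, Matrix.mul_apply, Fin.sum_univ_four] <;> grind

/-- The isomorphism induced by `R0` between the quotients by the radicals of `Gmat` and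
`Htilde0`. -/
noncomputable def R0ModRad : Matrix (Fin 2) (Fin 2) ℂ :=
  !![I / (Real.sqrt 2 : ℂ), 0;
     0, -I]

theorem modRadHtilde0_mul_R0 : modRadHtilde0 * R0 = R0ModRad * modRadGmat := by
  have hs := sqrt_two_mul_self
  ext i j
  fin_cases i <;> fin_cases j <;>
    simp [modRadHtilde0, R0, R0ModRad, modRadGmat, Matrix.mul_apply, Fin.sum_univ_four] <;> grind

theorem R0ModRad_conjTranspose : R0ModRadᴴ = -R0ModRadᵀ := by
  ext i j
  fin_cases i <;> fin_cases j <;> simp [R0ModRad, neg_div]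

theorem R0ModRad_det : R0ModRad.det = 1 / (Real.sqrt 2 : ℂ) := by
  simp [R0ModRad, div_mul_eq_mul_div, neg_div]

theorem R0ModRad_conjTranspose_mul_planeJ_mul :
    R0ModRadᴴ * ((2 * I * (Real.sqrt 2 : ℂ)) • planeJ ℂ) * R0ModRad = (-2 * I) • planeJ ℂ := by
  have hscalar : 2 * I * (Real.sqrt 2 : ℂ) * (1 / (Real.sqrt 2 : ℂ)) = 2 * I := by
    rw [mul_assoc, mul_one_div_cancel (by simp), mul_one]
  rw [R0ModRad_conjTranspose, Matrix.mul_smul, Matrix.smul_mul, Matrix.neg_mul, Matrix.neg_mul,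
    transpose_mul_planeJ_mul, R0ModRad_det, smul_neg, smul_smul, hscalar, neg_mul, neg_smul]

theorem R0_conjTranspose_mul_Htilde0_mul : R0ᴴ * Htilde0 * R0 = I • Gmat :=
  calc R0ᴴ * Htilde0 * R0
      = (modRadHtilde0 * R0)ᴴ * ((2 * I * (Real.sqrt 2 : ℂ)) • planeJ ℂ) *
          (modRadHtilde0 * R0) := by
        simp only [Htilde0_eq_pullback, conjTranspose_mul, Matrix.mul_assoc]
    _ = modRadGmatᴴ * (R0ModRadᴴ * ((2 * I * (Real.sqrt 2 : ℂ)) • planeJ ℂ) * R0ModRad) *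
          modRadGmat := by
        simp only [modRadHtilde0_mul_R0, conjTranspose_mul, Matrix.mul_assoc]
    _ = I • Gmat := by
        rw [R0ModRad_conjTranspose_mul_planeJ_mul, Gmat_eq_pullback, ← Matrix.smul_mul,
          ← Matrix.mul_smul, smul_smul, mul_comm I]

theorem stmt17 :
    R0.conjTranspose * R0 = 1 ∧
    R0.conjTranspose * Htilde0 * R0 = I • Gmat ∧
    (∀ ρ ∈ ({rho1, rho2, rho3} : Set (Matrix (Fin 4) (Fin 4) ℂ)),
      (R0⁻¹ * ρ * R0).conjTranspose * (I • Gmat) * (R0⁻¹ * ρ * R0) = I • Gmat) := by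
  refine ⟨R0_conjTranspose_mul_self, R0_conjTranspose_mul_Htilde0_mul, fun ρ hρ => ?_⟩
  have hR0 : IsUnit R0.det := isUnit_det_of_left_inverse R0_conjTranspose_mul_self
  rw [← R0_conjTranspose_mul_Htilde0_mul]
  exact (isInvariantForm_Htilde0_of_mem hρ).conj hR0
end
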